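/- arXiv:2106.06864 — 2 statements merged into one kernel-verified Lean document; each statement's English description precedes it below -/
import Mathlib

section
/- For all nonnegative integers n, i, j with i + j = n, one has N(n, i, j) = C(n, i), where C denotes the binomial coefficient. -/
/-- A word (list over `ℕ`) is down-up alternating if `w 1 > w 2 < w 3 > w 4 < ⋯`
(1-indexed). -/
def DownUpAlt (w : List ℕ) : Prop :=
  ∀ k : ℕ, k + 1 < w.length →
    if k % 2 = 0 then w.getD (k + 1) 0 < w.getD k 0 else w.getD k 0 < w.getD (k + 1) 0

/-- `N3 a b c` is the number of down-up alternating words over `{1,2,3}` that are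
empty or have first letter `≥ 2`, containing exactly `a` ones, `b` twos and
`c` threes (it is `0` if some argument is negative). -/
noncomputable def N3 (a b c : ℤ) : ℕ :=
  Nat.card {w : List ℕ // (∀ x ∈ w, 1 ≤ x ∧ x ≤ 3) ∧ DownUpAlt w ∧
    (w = [] ∨ 2 ≤ w.headI) ∧
    (w.count 1 : ℤ) = a ∧ (w.count 2 : ℤ) = b ∧ (w.count 3 : ℤ) = c}

theorem downUpAlt_nil : DownUpAlt [] := by
  intro k hk
  simp at hk

theorem downUpAlt_cons_cons (x y : ℕ) (t : List ℕ) :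
    DownUpAlt (x :: y :: t) ↔ y < x ∧ (t = [] ∨ y < t.headI) ∧ DownUpAlt t := by
  constructor
  · intro h
    refine ⟨by simpa using h 0, ?_, fun k hk => ?_⟩
    · cases t with
      | nil => exact Or.inl rfl
      | cons z s => exact Or.inr (by simpa using h 1)
    · simpa using h (k + 2) (by simp only [List.length_cons]; omega)
  · rintro ⟨hyx, hyt, ht⟩ k hk
    match k with
    | 0 => simpa using hyx
    | 1 =>
      cases t with
      | nil => simp at hk
      | cons z s => simpa using hyt
    | k + 2 => simpa using ht k (by simp only [List.length_cons] at hk; omega)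

/-- The words encoding reflection paths within three glass plates starting at the first plate. -/
def IsReflectionWord (w : List ℕ) : Prop :=
  (∀ x ∈ w, 1 ≤ x ∧ x ≤ 3) ∧ DownUpAlt w ∧ (w = [] ∨ 2 ≤ w.headI)

namespace IsReflectionWord

theorem nil : IsReflectionWord [] :=
  ⟨by simp, downUpAlt_nil, Or.inl rfl⟩

theorem eq_two_or_three {x : ℕ} {t : List ℕ} (h : IsReflectionWord (x :: t)) :
    x = 2 ∨ x = 3 := by
  have h₁ := h.1 x (by simp)
  have h₂ : 2 ≤ x := by simpa using h.2.2
  omega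

theorem of_cons_cons {x y : ℕ} {t : List ℕ} (h : IsReflectionWord (x :: y :: t)) :
    (1 ≤ y ∧ y < x) ∧ IsReflectionWord t := by
  obtain ⟨hl, ha, -⟩ := h
  obtain ⟨hyx, hyt, ht⟩ := (downUpAlt_cons_cons x y t).1 ha
  have hy := hl y (by simp)
  refine ⟨⟨hy.1, hyx⟩, fun z hz => hl z (by simp [hz]), ht, ?_⟩
  exact hyt.imp_right fun h => by omega

theorem cons_one {x : ℕ} {t : List ℕ} (hx : x = 2 ∨ x = 3) (h : IsReflectionWord t) :
    IsReflectionWord (x :: 1 :: t) := by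
  obtain ⟨hl, ha, hh⟩ := h
  refine ⟨?_, (downUpAlt_cons_cons x 1 t).2 ⟨by omega, hh, ha⟩, Or.inr ?_⟩
  · intro z hz
    simp only [List.mem_cons] at hz
    rcases hz with rfl | rfl | hz
    · omega
    · omega
    · exact hl z hz
  · simp only [List.headI_cons]
    omega

theorem count_one_le : ∀ {w : List ℕ}, IsReflectionWord w →
    w.count 1 ≤ w.count 2 + w.count 3
  | [], _ => by simp
  | [x], h => by rcases h.eq_two_or_three with rfl | rfl <;> simp
  | x :: y :: t, h => by
    obtain ⟨⟨hy, hyx⟩, ht⟩ := h.of_cons_cons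
    have ih := ht.count_one_le
    rcases h.eq_two_or_three with rfl | rfl <;> interval_cases y <;>
      simp <;> omega

end IsReflectionWord

/-- The words obtained by following each letter of a word in `i` twos and `j` threes by a one. -/
def interleavedOnes : ℕ → ℕ → Finset (List ℕ)
  | 0, 0 => {[]}
  | i + 1, 0 => (interleavedOnes i 0).image fun t => 2 :: 1 :: t
  | 0, j + 1 => (interleavedOnes 0 j).image fun t => 3 :: 1 :: t
  | i + 1, j + 1 => (interleavedOnes i (j + 1)).image (fun t => 2 :: 1 :: t) ∪
      (interleavedOnes (i + 1) j).image fun t => 3 :: 1 :: t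

theorem card_interleavedOnes (i j : ℕ) : (interleavedOnes i j).card = (i + j).choose i := by
  have inj (x : ℕ) : Function.Injective fun t : List ℕ => x :: 1 :: t := fun s t h => by
    simpa using h
  fun_induction interleavedOnes i j with
  | case1 => simp
  | case2 i ih => simpa [Finset.card_image_of_injective _ (inj 2)] using ih
  | case3 j ih => simpa [Finset.card_image_of_injective _ (inj 3)] using ih
  | case4 i j ih₁ ih₂ =>
    rw [Finset.card_union_of_disjoint, Finset.card_image_of_injective _ (inj 2),
      Finset.card_image_of_injective _ (inj 3), ih₁, ih₂,
      show i + 1 + (j + 1) = (i + (j + 1)) + 1 by omega, Nat.choose_succ_succ,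
      show i + 1 + j = i + (j + 1) by omega]
    simp [Finset.disjoint_left]

theorem two_cons_mem_interleavedOnes {i j : ℕ} {t : List ℕ} (h : t ∈ interleavedOnes i j) :
    2 :: 1 :: t ∈ interleavedOnes (i + 1) j := by
  cases j <;> simp [interleavedOnes, h]

theorem three_cons_mem_interleavedOnes {i j : ℕ} {t : List ℕ} (h : t ∈ interleavedOnes i j) :
    3 :: 1 :: t ∈ interleavedOnes i (j + 1) := by
  cases i <;> simp [interleavedOnes, h]

theorem IsReflectionWord.mem_interleavedOnes : ∀ {w : List ℕ}, IsReflectionWord w →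
    w.count 1 = w.count 2 + w.count 3 → w ∈ interleavedOnes (w.count 2) (w.count 3)
  | [], _, _ => by simp [interleavedOnes]
  | [x], h, hc => by rcases h.eq_two_or_three with rfl | rfl <;> simp at hc
  | x :: y :: t, h, hc => by
    obtain ⟨⟨hy, hyx⟩, ht⟩ := h.of_cons_cons
    have hle := ht.count_one_le
    rcases h.eq_two_or_three with rfl | rfl <;> interval_cases y <;>
      simp at hc ⊢
    · exact two_cons_mem_interleavedOnes (ht.mem_interleavedOnes (by omega))
    · exact three_cons_mem_interleavedOnes (ht.mem_interleavedOnes (by omega))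
    · omega

theorem isReflectionWord_of_mem_interleavedOnes {i j : ℕ} {w : List ℕ}
    (h : w ∈ interleavedOnes i j) :
    IsReflectionWord w ∧ w.count 1 = i + j ∧ w.count 2 = i ∧ w.count 3 = j := by
  fun_induction interleavedOnes i j generalizing w with
  | case1 =>
    obtain rfl : w = [] := by simpa using h
    simp [IsReflectionWord.nil]
  | case2 i ih =>
    obtain ⟨t, ht, rfl⟩ := Finset.mem_image.1 h
    obtain ⟨hw, h₁, h₂, h₃⟩ := ih ht
    refine ⟨hw.cons_one (Or.inl rfl), ?_⟩
    simp [h₁, h₂, h₃]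
  | case3 j ih =>
    obtain ⟨t, ht, rfl⟩ := Finset.mem_image.1 h
    obtain ⟨hw, h₁, h₂, h₃⟩ := ih ht
    refine ⟨hw.cons_one (Or.inr rfl), ?_⟩
    simp [h₁, h₂, h₃]
  | case4 i j ih₁ ih₂ =>
    rcases Finset.mem_union.1 h with h | h
    · obtain ⟨t, ht, rfl⟩ := Finset.mem_image.1 h
      obtain ⟨hw, h₁, h₂, h₃⟩ := ih₁ ht
      refine ⟨hw.cons_one (Or.inl rfl), ?_⟩
      simp [h₁, h₂, h₃]
      omega
    · obtain ⟨t, ht, rfl⟩ := Finset.mem_image.1 h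
      obtain ⟨hw, h₁, h₂, h₃⟩ := ih₂ ht
      refine ⟨hw.cons_one (Or.inr rfl), ?_⟩
      simp [h₁, h₂, h₃]
      omega

theorem stmt12 (n i j : ℕ) (h : i + j = n) :
    N3 (n : ℤ) (i : ℤ) (j : ℤ) = Nat.choose n i := by
  subst h
  rw [← card_interleavedOnes, ← Nat.card_eq_finsetCard]
  refine Nat.card_congr (Equiv.subtypeEquivRight fun w => ⟨?_, fun hw => ?_⟩)
  · rintro ⟨hl, ha, hh, h₁, h₂, h₃⟩
    norm_cast at h₁ h₂ h₃
    subst h₂ h₃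
    exact IsReflectionWord.mem_interleavedOnes ⟨hl, ha, hh⟩ h₁
  · obtain ⟨⟨hl, ha, hh⟩, h₁, h₂, h₃⟩ := isReflectionWord_of_mem_interleavedOnes hw
    exact ⟨hl, ha, hh, by exact_mod_cast h₁, by exact_mod_cast h₂, by exact_mod_cast h₃⟩
end

section
/- For all nonnegative integers n, i, j, set k = n + 1 if n + i + j is odd and k = n if n + i + j is even (i.e., k = n − 1 + gcd(2, i+j+n+1)), and set ℓ = k + j − i + gcd(2, i+j+n) (so the second summand is 2 if n+i+j is even and 1 if it is odd). Then N(n, i, j) = C(k, (k+j−i)/2) · C(⌊(ℓ−2)/2⌋ + ⌊(i+j−k)/2⌋, ⌊(ℓ−2)/2⌋), where the division (k+j−i)/2 is exact (k + j − i is always even), ⌊·⌋ denotes the integer floor (also for negative arguments), and the binomial coefficient C(α, β) for integers α, β is interpreted as follows: C(α, β) = α!/(β!(α−β)!) if 0 ≤ β ≤ α; C(α, −1) = 1 if α = −1 and C(α, −1) = 0 if α ≠ −1; and C(α, β) = 0 in all other cases. -/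
/-- The extended binomial coefficient of the paper: `Cz a b = C(a,b)` for
`0 ≤ b ≤ a`; `Cz a (-1) = 1` if `a = -1` and `0` otherwise; and `Cz a b = 0`
in all other cases. -/
def Cz (a b : ℤ) : ℤ :=
  if 0 ≤ b ∧ b ≤ a then (Nat.choose a.toNat b.toNat : ℤ)
  else if b = -1 then (if a = -1 then 1 else 0)
  else 0

/-- Down-up alternating words over `{1,2,3}` whose first letter, if any, exceeds `m`. -/
def AltAbove : ℕ → List ℕ → Prop
  | _, [] => True
  | m, [a] => m < a ∧ a ≤ 3
  | m, a :: b :: w => m < a ∧ a ≤ 3 ∧ 1 ≤ b ∧ b < a ∧ AltAbove b w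

lemma downUpAlt_cons_cons_s16 (a b : ℕ) (w : List ℕ) :
    DownUpAlt (a :: b :: w) ↔ b < a ∧ (w = [] ∨ b < w.headI) ∧ DownUpAlt w := by
  constructor
  · intro h
    refine ⟨by simpa using h 0 (by simp), ?_, ?_⟩
    · cases w with
      | nil => simp
      | cons c w => simpa using h 1 (by simp)
    · intro k hk
      have := h (k + 2) (by simp only [List.length_cons]; omega)
      simpa [Nat.add_mod_right, show k + 2 + 1 = (k + 1) + 1 + 1 by ring] using this
  · rintro ⟨h₁, h₂, h₃⟩ k hk
    match k with
    | 0 => simpa using h₁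
    | 1 =>
      cases w with
      | nil => simp at hk
      | cons c w => simpa using h₂
    | k + 2 =>
      have := h₃ k (by simp only [List.length_cons] at hk; omega)
      simpa [Nat.add_mod_right, show k + 2 + 1 = (k + 1) + 1 + 1 by ring] using this

lemma altAbove_iff (m : ℕ) (hm : 1 ≤ m) (w : List ℕ) :
    AltAbove m w ↔
      (∀ x ∈ w, 1 ≤ x ∧ x ≤ 3) ∧ DownUpAlt w ∧ (w = [] ∨ m < w.headI) := by
  induction m, w using AltAbove.induct with
  | case1 m => simp [AltAbove, DownUpAlt]
  | case2 m a =>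
    simp only [AltAbove, DownUpAlt, List.mem_singleton, forall_eq, List.length_singleton,
      List.headI_cons, reduceCtorEq, false_or]
    constructor
    · rintro ⟨h₁, h₂⟩
      exact ⟨by omega, fun k hk => by omega, h₁⟩
    · rintro ⟨h₁, -, h₂⟩
      exact ⟨h₂, h₁.2⟩
  | case3 m a b w ih =>
    rw [AltAbove, downUpAlt_cons_cons_s16]
    simp only [List.mem_cons, forall_eq_or_imp, List.headI_cons, reduceCtorEq, false_or]
    constructor
    · rintro ⟨h₁, h₂, h₃, h₄, h₅⟩
      obtain ⟨h₆, h₇, h₈⟩ := (ih h₃).1 h₅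
      exact ⟨⟨by omega, by omega, h₆⟩, ⟨h₄, h₈, h₇⟩, h₁⟩
    · rintro ⟨⟨h₁, h₂, h₃⟩, ⟨h₄, h₅, h₆⟩, h₇⟩
      exact ⟨h₇, h₁.2, h₂.1, h₄, (ih h₂.1).2 ⟨h₃, h₆, h₅⟩⟩

/-- The words of `AltAbove m` that split into `x` blocks `21`, `y` blocks `31` and `z` blocks `32`,
where the final `e` ones (`e ≤ 1`) are omitted. -/
def blockWords (e m x y z : ℕ) : Set (List ℕ) :=
  {w | AltAbove m w ∧ w.count 1 + e = x + y ∧ w.count 2 = x + z ∧ w.count 3 = y + z}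

lemma AltAbove.exists_blocks {m : ℕ} {w : List ℕ} (hm : 1 ≤ m) (h : AltAbove m w) :
    ∃ e x y z, e ≤ 1 ∧ w ∈ blockWords e m x y z := by
  induction m, w using AltAbove.induct with
  | case1 m => exact ⟨0, 0, 0, 0, by simp [blockWords, AltAbove]⟩
  | case2 m a =>
    have h' := h
    obtain ⟨h₁, h₂⟩ := h'
    obtain rfl | rfl : a = 2 ∨ a = 3 := by omega
    · exact ⟨1, 1, 0, 0, le_rfl, h, by simp⟩
    · exact ⟨1, 0, 1, 0, le_rfl, h, by simp⟩
  | case3 m a b w ih =>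
    have h' := h
    obtain ⟨h₁, h₂, h₃, h₄, h₅⟩ := h'
    obtain ⟨e, x, y, z, he, -, c₁, c₂, c₃⟩ := ih h₃ h₅
    obtain ⟨rfl, rfl⟩ | ⟨rfl, rfl⟩ | ⟨rfl, rfl⟩ :
      (a = 2 ∧ b = 1) ∨ (a = 3 ∧ b = 1) ∨ (a = 3 ∧ b = 2) := by omega
    · exact ⟨e, x + 1, y, z, he, h, by simp; omega⟩
    · exact ⟨e, x, y + 1, z, he, h, by simp; omega⟩
    · exact ⟨e, x, y, z + 1, he, h, by simp; omega⟩

lemma mem_blockWords_one {e x y z : ℕ} (he : e ≤ 1) (w : List ℕ) :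
    w ∈ blockWords e 1 x y z ↔
      w ∈ blockWords e 2 x y z ∨ (e = 1 ∧ x = 1 ∧ y = 0 ∧ z = 0 ∧ w = [2]) ∨
      ∃ x' v, x = x' + 1 ∧ w = 2 :: 1 :: v ∧ v ∈ blockWords e 1 x' y z := by
  constructor
  · rintro ⟨h, c₁, c₂, c₃⟩
    match w, h with
    | [], h => exact Or.inl ⟨h, c₁, c₂, c₃⟩
    | [a], ⟨h₁, h₂⟩ =>
      obtain rfl | rfl : a = 2 ∨ a = 3 := by omega
      · simp at c₁ c₂ c₃
        exact Or.inr (Or.inl ⟨by omega, by omega, by omega, by omega, rfl⟩)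
      · exact Or.inl ⟨⟨by omega, h₂⟩, c₁, c₂, c₃⟩
    | a :: b :: w, ⟨h₁, h₂, h₃, h₄, h₅⟩ =>
      obtain rfl | rfl : a = 2 ∨ a = 3 := by omega
      · obtain rfl : b = 1 := by omega
        obtain ⟨e', x', y', z', he', -, d₁, d₂, d₃⟩ := h₅.exists_blocks le_rfl
        simp at c₁ c₂ c₃
        exact Or.inr (Or.inr ⟨x', w, by omega, rfl, h₅, by omega, by omega, by omega⟩)
      · exact Or.inl ⟨⟨by omega, h₂, h₃, h₄, h₅⟩, c₁, c₂, c₃⟩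
  · rintro (⟨h, c⟩ | ⟨rfl, rfl, rfl, rfl, rfl⟩ | ⟨x', v, rfl, rfl, h, c⟩)
    · refine ⟨?_, c⟩
      match w, h with
      | [], h => trivial
      | [a], ⟨h₁, h₂⟩ => exact ⟨by omega, h₂⟩
      | a :: b :: w, ⟨h₁, h₂⟩ => exact ⟨by omega, h₂⟩
    · simp [blockWords, AltAbove]
    · refine ⟨⟨by omega, by omega, by omega, by omega, h⟩, ?_⟩
      simp; omega

lemma mem_blockWords_two {e x y z : ℕ} (he : e ≤ 1) (w : List ℕ) :
    w ∈ blockWords e 2 x y z ↔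
      (e = 0 ∧ x = 0 ∧ y = 0 ∧ z = 0 ∧ w = []) ∨ (e = 1 ∧ x = 0 ∧ y = 1 ∧ z = 0 ∧ w = [3]) ∨
      (∃ y' v, y = y' + 1 ∧ w = 3 :: 1 :: v ∧ v ∈ blockWords e 1 x y' z) ∨
      ∃ z' v, z = z' + 1 ∧ w = 3 :: 2 :: v ∧ v ∈ blockWords e 2 x y z' := by
  constructor
  · rintro ⟨h, c₁, c₂, c₃⟩
    match w, h with
    | [], h =>
      simp at c₁ c₂ c₃
      exact Or.inl ⟨by omega, by omega, by omega, by omega, rfl⟩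
    | [a], ⟨h₁, h₂⟩ =>
      obtain rfl : a = 3 := by omega
      simp at c₁ c₂ c₃
      exact Or.inr (Or.inl ⟨by omega, by omega, by omega, by omega, rfl⟩)
    | a :: b :: w, ⟨h₁, h₂, h₃, h₄, h₅⟩ =>
      obtain rfl : a = 3 := by omega
      obtain ⟨e', x', y', z', he', -, d₁, d₂, d₃⟩ := h₅.exists_blocks h₃
      obtain rfl | rfl : b = 1 ∨ b = 2 := by omega
      · simp at c₁ c₂ c₃
        exact Or.inr (Or.inr (Or.inl ⟨y', w, by omega, rfl, h₅, by omega, by omega, by omega⟩))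
      · simp at c₁ c₂ c₃
        exact Or.inr (Or.inr (Or.inr ⟨z', w, by omega, rfl, h₅, by omega, by omega, by omega⟩))
  · rintro (⟨rfl, rfl, rfl, rfl, rfl⟩ | ⟨rfl, rfl, rfl, rfl, rfl⟩ |
      ⟨x', v, rfl, rfl, h, c⟩ | ⟨x', v, rfl, rfl, h, c⟩)
    · simp [blockWords, AltAbove]
    · simp [blockWords, AltAbove]
    · refine ⟨⟨by omega, by omega, by omega, by omega, h⟩, ?_⟩
      simp; omega
    · refine ⟨⟨by omega, by omega, by omega, by omega, h⟩, ?_⟩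
      simp; omega

lemma encard_image_cons_cons (a b : ℕ) (s : Set (List ℕ)) :
    ((fun v => a :: b :: v) '' s).encard = s.encard :=
  Function.Injective.encard_image (fun v w h => by simpa using h) s

lemma blockWords_one_zero {e : ℕ} (he : e ≤ 1) (y z : ℕ) :
    blockWords e 1 0 y z = blockWords e 2 0 y z := by
  ext w
  rw [mem_blockWords_one he]
  simp

lemma encard_blockWords_one_succ {e : ℕ} (he : e ≤ 1) (x y z : ℕ) :
    (blockWords e 1 (x + 1) y z).encard =
      (blockWords e 2 (x + 1) y z).encard + (blockWords e 1 x y z).encard +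
        (if e = 1 ∧ x = 0 ∧ y = 0 ∧ z = 0 then 1 else 0) := by
  have key : blockWords e 1 (x + 1) y z =
      blockWords e 2 (x + 1) y z ∪ (fun v => 2 :: 1 :: v) '' blockWords e 1 x y z ∪
        (if e = 1 ∧ x = 0 ∧ y = 0 ∧ z = 0 then {[2]} else ∅) := by
    ext w
    rw [mem_blockWords_one he]
    split_ifs with h
    · obtain ⟨rfl, rfl, rfl, rfl⟩ := h
      simp; grind
    · simp; grind
  rw [key, Set.encard_union_eq, Set.encard_union_eq, encard_image_cons_cons]
  · split_ifs <;> simp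
  · rw [Set.disjoint_left]
    rintro w hw ⟨v, -, rfl⟩
    simp [blockWords, AltAbove] at hw
  · split_ifs
    · simp [blockWords, AltAbove]
    · simp

lemma encard_blockWords_two_succ_zero {e : ℕ} (he : e ≤ 1) (x y : ℕ) :
    (blockWords e 2 x (y + 1) 0).encard =
      (blockWords e 1 x y 0).encard + (if e = 1 ∧ x = 0 ∧ y = 0 then 1 else 0) := by
  have key : blockWords e 2 x (y + 1) 0 =
      (fun v => 3 :: 1 :: v) '' blockWords e 1 x y 0 ∪
        (if e = 1 ∧ x = 0 ∧ y = 0 then {[3]} else ∅) := by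
    ext w
    rw [mem_blockWords_two he]
    split_ifs with h
    · obtain ⟨rfl, rfl, rfl⟩ := h
      simp; grind
    · simp; grind
  rw [key, Set.encard_union_eq, encard_image_cons_cons]
  · split_ifs <;> simp
  · split_ifs <;> simp

lemma encard_blockWords_two_succ_succ {e : ℕ} (he : e ≤ 1) (x y z : ℕ) :
    (blockWords e 2 x (y + 1) (z + 1)).encard =
      (blockWords e 1 x y (z + 1)).encard + (blockWords e 2 x (y + 1) z).encard := by
  have key : blockWords e 2 x (y + 1) (z + 1) =
      (fun v => 3 :: 1 :: v) '' blockWords e 1 x y (z + 1) ∪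
        (fun v => 3 :: 2 :: v) '' blockWords e 2 x (y + 1) z := by
    ext w
    rw [mem_blockWords_two he]
    simp; grind
  rw [key, Set.encard_union_eq, encard_image_cons_cons, encard_image_cons_cons]
  rw [Set.disjoint_left]
  rintro _ ⟨v, -, rfl⟩ ⟨v', -, h⟩
  simp at h

lemma encard_blockWords_two_zero_succ {e : ℕ} (he : e ≤ 1) (x z : ℕ) :
    (blockWords e 2 x 0 (z + 1)).encard = (blockWords e 2 x 0 z).encard := by
  have key : blockWords e 2 x 0 (z + 1) = (fun v => 3 :: 2 :: v) '' blockWords e 2 x 0 z := by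
    ext w
    rw [mem_blockWords_two he]
    simp; grind
  rw [key, encard_image_cons_cons]

lemma encard_blockWords_two_zero_zero {e : ℕ} (he : e ≤ 1) (x : ℕ) :
    (blockWords e 2 x 0 0).encard = if e = 0 ∧ x = 0 then 1 else 0 := by
  have key : blockWords e 2 x 0 0 = if e = 0 ∧ x = 0 then {[]} else ∅ := by
    ext w
    rw [mem_blockWords_two he]
    split_ifs with h
    · simp [h]
    · simp; grind
  rw [key]
  split_ifs <;> simp

/-- Excluding the degenerate case of an omitted final one without any block `21` or `31`, the words
are counted by placing the blocks `21` and `32` independently relative to the blocks `31`. -/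
lemma encard_blockWords {e : ℕ} (he : e ≤ 1) (x y z : ℕ) :
    (blockWords e 2 x y z).encard =
      (if e = 1 ∧ x = 0 ∧ y = 0 then 0
        else y.multichoose x * (y + 1 - e).multichoose z : ℕ) ∧
    (blockWords e 1 x y z).encard =
      (if e = 1 ∧ x = 0 ∧ y = 0 then 0
        else (y + 1).multichoose x * (y + 1 - e).multichoose z : ℕ) := by
  have one_of_two (y z : ℕ) (h : ∀ x, (blockWords e 2 x y z).encard =
      (if e = 1 ∧ x = 0 ∧ y = 0 then 0
        else y.multichoose x * (y + 1 - e).multichoose z : ℕ)) (x : ℕ) :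
      (blockWords e 1 x y z).encard = (if e = 1 ∧ x = 0 ∧ y = 0 then 0
        else (y + 1).multichoose x * (y + 1 - e).multichoose z : ℕ) := by
    induction x with
    | zero => rw [blockWords_one_zero he, h]; simp
    | succ x ih =>
      rw [encard_blockWords_one_succ he, h, ih]
      norm_cast
      rw [Nat.multichoose_succ_succ]
      obtain rfl | rfl : e = 0 ∨ e = 1 := by omega
      · simp; ring
      · rcases x with _ | x <;> rcases y with _ | y <;> rcases z with _ | z <;>
          simp <;> ring
  suffices two : ∀ y z x, (blockWords e 2 x y z).encard =
      (if e = 1 ∧ x = 0 ∧ y = 0 then 0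
        else y.multichoose x * (y + 1 - e).multichoose z : ℕ) from
    ⟨two y z x, one_of_two y z (two y z) x⟩
  intro y
  induction y with
  | zero =>
    intro z
    induction z with
    | zero =>
      intro x
      rw [encard_blockWords_two_zero_zero he]
      rcases x with _ | x
      · split_ifs <;> simp <;> omega
      · simp
    | succ z ih =>
      intro x
      rw [encard_blockWords_two_zero_succ he, ih]
      rcases x with _ | x
      · obtain rfl | rfl : e = 0 ∨ e = 1 := by omega
        · simp
        · simp
      · simp
  | succ y ihy =>
    intro z
    induction z with
    | zero =>
      intro x
      rw [encard_blockWords_two_succ_zero he, one_of_two y 0 (ihy 0)]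
      norm_cast
      by_cases h : e = 1 ∧ x = 0 ∧ y = 0
      · simp [h]
      · simp [h]
    | succ z ihz =>
      intro x
      rw [encard_blockWords_two_succ_succ he, one_of_two y _ (ihy _), ihz]
      norm_cast
      rw [show y + 1 + 1 - e = (y + 1 - e) + 1 by omega, Nat.multichoose_succ_succ]
      by_cases h : e = 1 ∧ x = 0 ∧ y = 0
      · obtain ⟨rfl, rfl, rfl⟩ := h
        simp
      · simp [h]; ring

lemma Cz_add_natCast (a b : ℕ) : Cz (a + b : ℤ) b = (b + 1).multichoose a := by
  rw [Cz, if_pos (by omega), Nat.multichoose_eq, show b + 1 + a - 1 = a + b by omega,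
    Nat.choose_symm_add]
  norm_cast

lemma Cz_of_neg {a b : ℤ} (ha : 0 ≤ a) (hb : b < 0) : Cz a b = 0 := by
  unfold Cz
  split_ifs <;> omega

lemma Cz_of_lt {a b : ℤ} (hb : b ≠ -1) (h : a < b) : Cz a b = 0 := by
  unfold Cz
  split_ifs <;> omega

lemma Cz_pred_add (y z : ℕ) : Cz ((y : ℤ) - 1 + z) ((y : ℤ) - 1) = y.multichoose z := by
  rcases y with _ | y
  · rcases z with _ | z
    · simp [Cz]
    · rw [Cz, if_neg (by omega), if_pos (by simp), if_neg (by push_cast; omega)]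
      simp
  · rw [← Cz_add_natCast]
    congr 1 <;> push_cast <;> ring

lemma N3_eq_ncard (n i j : ℕ) :
    N3 n i j = {w | AltAbove 1 w ∧ w.count 1 = n ∧ w.count 2 = i ∧ w.count 3 = j}.ncard := by
  rw [N3, ← Nat.card_coe_set_eq]
  simp only [altAbove_iff 1 le_rfl, Nat.cast_inj, and_assoc]
  rfl

lemma N3_of_blocks {e n i j x y z : ℕ} (he : e ≤ 1) (hn : n + e = x + y) (hi : i = x + z)
    (hj : j = y + z) :
    N3 n i j = (y + 1).multichoose x * (y + 1 - e).multichoose z := by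
  have hset : {w | AltAbove 1 w ∧ w.count 1 = n ∧ w.count 2 = i ∧ w.count 3 = j} =
      blockWords e 1 x y z := by
    ext w
    simp only [blockWords, Set.mem_ofPred_eq]
    constructor <;> rintro ⟨h, c₁, c₂, c₃⟩ <;> exact ⟨h, by omega, by omega, by omega⟩
  rw [N3_eq_ncard, hset, Set.ncard, (encard_blockWords he x y z).2, if_neg (by omega)]
  rfl

lemma exists_blocks_of_N3_ne_zero {n i j : ℕ} (h : N3 n i j ≠ 0) :
    ∃ e x y z, e ≤ 1 ∧ n + e = x + y ∧ i = x + z ∧ j = y + z := by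
  rw [N3_eq_ncard] at h
  obtain ⟨w, hw, rfl, rfl, rfl⟩ := Set.nonempty_of_ncard_ne_zero h
  obtain ⟨e, x, y, z, he, -, c⟩ := hw.exists_blocks le_rfl
  exact ⟨e, x, y, z, he, c⟩

/-- The count in terms of the numbers of blocks `21`, `31` and `32`, which may be negative. -/
lemma N3_eq_Cz_mul_Cz {e n i j : ℕ} {x y z : ℤ} (he : e ≤ 1) (hn : (n : ℤ) + e = x + y)
    (hi : (i : ℤ) = x + z) (hj : (j : ℤ) = y + z) :
    (N3 n i j : ℤ) = Cz (n + e) y * Cz (y - e + z) (y - e) := by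
  by_cases hpos : 0 ≤ x ∧ 0 ≤ y ∧ 0 ≤ z
  · obtain ⟨hx, hy, hz⟩ := hpos
    lift x to ℕ using hx
    lift y to ℕ using hy
    lift z to ℕ using hz
    rw [N3_of_blocks (x := x) (y := y) (z := z) he (by omega) (by omega) (by omega), hn,
      Cz_add_natCast]
    obtain rfl | rfl : e = 0 ∨ e = 1 := by omega
    · have := Cz_add_natCast z y
      simp [add_comm (y : ℤ) z, this]
    · simp [Cz_pred_add]
  · have hzero : N3 n i j = 0 := by
      by_contra h
      obtain ⟨e', x', y', z', he', h₁, h₂, h₃⟩ := exists_blocks_of_N3_ne_zero h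
      omega
    rw [hzero]
    by_cases hy : y < 0
    · rw [Cz_of_neg (by omega) hy]; simp
    by_cases hx : x < 0
    · rw [Cz_of_lt (by omega) (by omega)]; simp
    rw [Cz_of_lt (a := y - e + z) (by omega) (by omega)]; simp

theorem stmt16 (n i j : ℕ) :
    let k : ℤ := if Odd (n + i + j) then (n : ℤ) + 1 else (n : ℤ)
    let l : ℤ := k + (j : ℤ) - (i : ℤ) + (if Even (n + i + j) then 2 else 1)
    (N3 (n : ℤ) (i : ℤ) (j : ℤ) : ℤ) =
      Cz k (Int.fdiv (k + (j : ℤ) - (i : ℤ)) 2) *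
        Cz (Int.fdiv (l - 2) 2 + Int.fdiv ((i : ℤ) + (j : ℤ) - k) 2)
          (Int.fdiv (l - 2) 2) := by
  intro k l
  simp only [Int.fdiv_eq_ediv_of_nonneg _ (zero_le_two : (0 : ℤ) ≤ 2)]
  by_cases h : Even (n + i + j)
  · have hk : k = n := if_neg (Nat.not_odd_iff_even.2 h)
    have hl : l = k + j - i + 2 := by simp only [l, if_pos h]
    rw [Nat.even_iff] at h
    rw [N3_eq_Cz_mul_Cz (e := 0) (x := (n + i - j) / 2) (y := (k + j - i) / 2)
      (z := (i + j - k) / 2) (by omega) (by omega) (by omega) (by omega)]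
    congr 2 <;> omega
  · have hk : k = n + 1 := if_pos (Nat.not_even_iff_odd.1 h)
    have hl : l = k + j - i + 1 := by simp only [l, if_neg h]
    rw [Nat.even_iff] at h
    rw [N3_eq_Cz_mul_Cz (e := 1) (x := (n + 1 + i - j) / 2) (y := (k + j - i) / 2)
      (z := (i + j - k) / 2) (by omega) (by omega) (by omega) (by omega)]
    congr 2 <;> omega
end
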